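/- arXiv:0904.1444 — 5 statements merged into one kernel-verified Lean document; each statement's English description precedes it below -/
import Mathlib

section
/- For every real α > 2, the improper integral ∫₀^∞ r/(1+r^α)² dr equals (α−2)·π/(α²·sin(2π/α)). -/
open Real MeasureTheory

/-!
Substituting `t = r ^ α` and then `x = (1 + t)⁻¹` turns `∫₀^∞ r ^ (s - 1) / (1 + r ^ α) ^ p dr` into
Euler's Beta integral, with value `B(s / α, p - s / α) / α`. For `p = 2` the denominator `Γ(p)` is
`1`, and `Γ(2 - z) = (1 - z) Γ(1 - z)` reduces the numerator to the reflection formula for `Γ`.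
-/

open Set ProbabilityTheory

theorem integral_rpow_mul_one_sub_rpow {a b : ℝ} (ha : 0 < a) (hb : 0 < b) :
    ∫ x in Ioo (0 : ℝ) 1, x ^ (a - 1) * (1 - x) ^ (b - 1) = beta a b := by
  have ofReal_integrand : EqOn
      (fun x : ℝ ↦ (x : ℂ) ^ ((a : ℂ) - 1) * (1 - (x : ℂ)) ^ ((b : ℂ) - 1))
      (fun x ↦ ((x ^ (a - 1) * (1 - x) ^ (b - 1) : ℝ) : ℂ)) (uIcc 0 1) := by
    intro x hx
    rw [uIcc_of_le zero_le_one] at hx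
    simp [Complex.ofReal_cpow hx.1, Complex.ofReal_cpow (sub_nonneg.2 hx.2)]
  rw [beta_eq_betaIntegralReal a b ha hb, Complex.betaIntegral,
    intervalIntegral.integral_congr ofReal_integrand, intervalIntegral.integral_ofReal,
    Complex.ofReal_re, intervalIntegral.integral_of_le zero_le_one, integral_Ioc_eq_integral_Ioo]

theorem image_inv_one_add_Ioi_zero :
    (fun t : ℝ ↦ (1 + t)⁻¹) '' Ioi 0 = Ioo 0 1 := by
  rw [← image_image (fun u : ℝ ↦ u⁻¹) (fun t ↦ 1 + t), image_const_add_Ioi, add_zero,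
    image_inv_eq_inv, inv_Ioi₀ one_pos, inv_one]

theorem integral_comp_inv_one_add_Ioi {E : Type*} [NormedAddCommGroup E] [NormedSpace ℝ E]
    (g : ℝ → E) :
    ∫ t in Ioi (0 : ℝ), ((1 + t) ^ 2)⁻¹ • g (1 + t)⁻¹ = ∫ x in Ioo (0 : ℝ) 1, g x := by
  have hasDerivWithinAt_inv_one_add (t : ℝ) (ht : t ∈ Ioi 0) :
      HasDerivWithinAt (fun t ↦ (1 + t)⁻¹) (-1 / (1 + t) ^ 2) (Ioi 0) t :=
    (((hasDerivAt_id t).const_add 1).fun_inv (add_pos one_pos ht).ne').hasDerivWithinAt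
  have injOn_inv_one_add : InjOn (fun t : ℝ ↦ (1 + t)⁻¹) (Ioi 0) :=
    (inv_injective.comp (add_right_injective 1)).injOn
  rw [← image_inv_one_add_Ioi_zero, integral_image_eq_integral_abs_deriv_smul measurableSet_Ioi
    hasDerivWithinAt_inv_one_add injOn_inv_one_add]
  simp [abs_div]

theorem integral_rpow_div_one_add_rpow {a b : ℝ} (ha : 0 < a) (hb : 0 < b) :
    ∫ t in Ioi (0 : ℝ), t ^ (a - 1) / (1 + t) ^ (a + b) = beta a b := by
  have beta_comm : beta a b = beta b a := by simp only [beta, mul_comm, add_comm]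
  rw [beta_comm, ← integral_rpow_mul_one_sub_rpow hb ha, ← integral_comp_inv_one_add_Ioi]
  refine setIntegral_congr_fun measurableSet_Ioi fun t (ht : 0 < t) ↦ ?_
  have one_add_pos : 0 < 1 + t := by positivity
  have one_sub_inv : 1 - (1 + t)⁻¹ = t / (1 + t) := by field_simp; ring
  have rpow_split : (1 + t) ^ (a + b) = (1 + t) ^ 2 * (1 + t) ^ (b - 1) * (1 + t) ^ (a - 1) := by
    rw [← rpow_natCast, ← rpow_add one_add_pos, ← rpow_add one_add_pos]
    congr 1
    push_cast
    ring
  simp only [smul_eq_mul, one_sub_inv]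
  rw [rpow_split, inv_rpow one_add_pos.le, div_rpow ht.le one_add_pos.le]
  field_simp

theorem integral_rpow_div_one_add_rpow_rpow {s α p : ℝ} (hα : 0 < α) (hs : 0 < s)
    (hsp : s / α < p) :
    ∫ r in Ioi (0 : ℝ), r ^ (s - 1) / (1 + r ^ α) ^ p = beta (s / α) (p - s / α) / α := by
  rw [← integral_rpow_div_one_add_rpow (div_pos hs hα) (sub_pos.2 hsp), add_sub_cancel,
    ← integral_comp_rpow_Ioi_of_pos (g := fun t ↦ t ^ (s / α - 1) / (1 + t) ^ p) hα, ← integral_div]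
  refine setIntegral_congr_fun measurableSet_Ioi fun r (hr : 0 < r) ↦ ?_
  have rpow_split : r ^ (s - 1) = r ^ (α - 1) * (r ^ α) ^ (s / α - 1) := by
    rw [← rpow_mul hr.le, ← rpow_add hr]
    congr 1
    field_simp
    ring
  simp only [smul_eq_mul, rpow_split]
  field_simp

theorem beta_two_sub {z : ℝ} (hz : z ≠ 1) :
    beta z (2 - z) = (1 - z) * π / sin (π * z) := by
  have Gamma_two_sub : Gamma (2 - z) = (1 - z) * Gamma (1 - z) := by
    rw [← Gamma_add_one (sub_ne_zero.2 hz.symm)]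
    congr 1
    ring
  rw [beta, add_sub_cancel, Gamma_two, div_one, Gamma_two_sub, mul_left_comm,
    Gamma_mul_Gamma_one_sub, mul_div_assoc]

theorem radial_integral_second_moment_general {s α : ℝ} (hs : 0 < s) (hsα : s < 2 * α)
    (hne : s ≠ α) :
    ∫ r in Ioi (0 : ℝ), r ^ (s - 1) / (1 + r ^ α) ^ 2 =
      (α - s) * π / (α ^ 2 * sin (s * π / α)) := by
  have hα : 0 < α := by linarith
  have ratio_ne_one : s / α ≠ 1 := fun h ↦ hne ((div_eq_one_iff_eq hα.ne').1 h)
  calc ∫ r in Ioi (0 : ℝ), r ^ (s - 1) / (1 + r ^ α) ^ 2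
      = beta (s / α) (2 - s / α) / α := by
        simpa only [rpow_two] using
          integral_rpow_div_one_add_rpow_rpow hα hs ((div_lt_iff₀ hα).2 hsα)
    _ = (1 - s / α) * π / sin (π * (s / α)) / α := by rw [beta_two_sub ratio_ne_one]
    _ = (α - s) * π / (α ^ 2 * sin (s * π / α)) := by
        rw [show π * (s / α) = s * π / α by ring]
        field_simp

/-- For every real `α > 2`, the improper integral `∫₀^∞ r/(1+r^α)² dr`
equals `(α−2)·π/(α²·sin(2π/α))`. -/
theorem radial_integral_second_moment (α : ℝ) (hα : 2 < α) :
    ∫ r in Set.Ioi (0 : ℝ), r / (1 + r ^ α) ^ 2 =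
      (α - 2) * π / (α ^ 2 * Real.sin (2 * π / α)) := by
  simpa only [show (2 : ℝ) - 1 = 1 by norm_num, rpow_one] using
    radial_integral_second_moment_general two_pos (by linarith) hα.ne
end

section
/- For ε > 0 and α > 2, the function x ↦ 1/(ε+‖x‖^α) is integrable on ℝ² and ∫_{ℝ²} 1/(ε+‖x‖^α) dx = 2π²·ε^{2/α−1}/(α·sin(2π/α)). -/
open Real MeasureTheory

/-!
Writing `(ε + r ^ p) ^ (-q)` as `(Γ q)⁻¹ ∫ u ^ (q - 1) e ^ (-(ε + r ^ p) u) du` and exchanging the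
order of integration evaluates `∫ r ^ (s - 1) (ε + r ^ p) ^ (-q) dr` in terms of the Gamma
function. Polar coordinates in dimension `d` reduce the integral of `(ε + ‖x‖ ^ α) ^ (-q)` to the
case `p = α`, `s = d`, and for `q = 1` the reflection formula turns `Γ (d / α) Γ (1 - d / α)` into
`π / sin (π d / α)`. Integrability then comes for free: the Bochner integral of a non-integrable
function is `0` by convention, whereas this value is positive.
-/

section Radial

open Set

variable {p q s ε : ℝ}

theorem lintegral_const_mul_rpow_mul_exp_neg_mul_rpow_Ioi {b c : ℝ} (hp : 0 < p) (hs : 0 < s)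
    (hb : 0 < b) (hc : 0 ≤ c) :
    ∫⁻ t in Ioi (0 : ℝ), ENNReal.ofReal (c * (t ^ (s - 1) * exp (-b * t ^ p))) =
      ENNReal.ofReal (c * (b ^ (-(s / p)) * (Gamma (s / p) / p))) := by
  have integrable : IntegrableOn (fun t : ℝ ↦ c * (t ^ (s - 1) * exp (-b * t ^ p))) (Ioi 0) :=
    (integrableOn_rpow_mul_exp_neg_mul_rpow (by linarith) hp hb).const_mul c
  have nonneg : ∀ᵐ t ∂volume.restrict (Ioi (0 : ℝ)), 0 ≤ c * (t ^ (s - 1) * exp (-b * t ^ p)) := by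
    filter_upwards [ae_restrict_mem measurableSet_Ioi] with t (ht : 0 < t)
    positivity
  rw [← ofReal_integral_eq_lintegral_ofReal integrable nonneg, integral_const_mul,
    integral_rpow_mul_exp_neg_mul_rpow hp (by linarith) hb, sub_add_cancel, neg_div]
  ring_nf

theorem lintegral_const_mul_rpow_mul_exp_neg_mul_Ioi {b c : ℝ} (hs : 0 < s) (hb : 0 < b)
    (hc : 0 ≤ c) :
    ∫⁻ t in Ioi (0 : ℝ), ENNReal.ofReal (c * (t ^ (s - 1) * exp (-b * t))) =
      ENNReal.ofReal (c * (b ^ (-s) * Gamma s)) := by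
  simpa only [rpow_one, div_one] using
    lintegral_const_mul_rpow_mul_exp_neg_mul_rpow_Ioi one_pos hs hb hc

theorem ofReal_mul_rpow_neg_eq_lintegral_exp {a r : ℝ} (hq : 0 < q) (ha : 0 ≤ a) (hr : 0 < r) :
    ENNReal.ofReal (a * r ^ (-q)) =
      ∫⁻ u in Ioi (0 : ℝ), ENNReal.ofReal (a / Gamma q * (u ^ (q - 1) * exp (-r * u))) := by
  rw [lintegral_const_mul_rpow_mul_exp_neg_mul_Ioi hq hr (by positivity)]
  have hΓ : Gamma q ≠ 0 := (Gamma_pos_of_pos hq).ne'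
  field_simp

theorem lintegral_rpow_mul_add_rpow_rpow_neg_Ioi (hp : 0 < p) (hs : 0 < s) (hsq : s / p < q)
    (hε : 0 < ε) :
    ∫⁻ t in Ioi (0 : ℝ), ENNReal.ofReal (t ^ (s - 1) * (ε + t ^ p) ^ (-q)) =
      ENNReal.ofReal (ε ^ (s / p - q) * (Gamma (s / p) * Gamma (q - s / p) / (p * Gamma q))) := by
  have hq : 0 < q := (div_pos hs hp).trans hsq
  let K (t u : ℝ) : ℝ := t ^ (s - 1) / Gamma q * (u ^ (q - 1) * exp (-(ε + t ^ p) * u))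
  have lintegral_K_left (u : ℝ) (hu : u ∈ Ioi 0) : ∫⁻ t in Ioi 0, ENNReal.ofReal (K t u) =
      ENNReal.ofReal (Gamma (s / p) / (p * Gamma q) * (u ^ (q - s / p - 1) * exp (-ε * u))) := by
    have hu : 0 < u := hu
    have K_eq (t : ℝ) : K t u =
        u ^ (q - 1) * exp (-ε * u) / Gamma q * (t ^ (s - 1) * exp (-u * t ^ p)) := by
      have exponent_eq : -(ε + t ^ p) * u = -ε * u + -u * t ^ p := by ring
      simp only [K, exponent_eq, exp_add]
      ring
    simp only [K_eq]
    rw [lintegral_const_mul_rpow_mul_exp_neg_mul_rpow_Ioi hp hs hu (by positivity),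
      show q - s / p - 1 = q - 1 + -(s / p) by ring, rpow_add hu]
    ring_nf
  calc ∫⁻ t in Ioi 0, ENNReal.ofReal (t ^ (s - 1) * (ε + t ^ p) ^ (-q))
      = ∫⁻ t in Ioi 0, ∫⁻ u in Ioi 0, ENNReal.ofReal (K t u) :=
        setLIntegral_congr_fun measurableSet_Ioi fun t (ht : 0 < t) ↦
          ofReal_mul_rpow_neg_eq_lintegral_exp hq (by positivity) (by positivity)
    _ = ∫⁻ u in Ioi 0, ∫⁻ t in Ioi 0, ENNReal.ofReal (K t u) :=
        lintegral_lintegral_swap (by fun_prop)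
    _ = ENNReal.ofReal (Gamma (s / p) / (p * Gamma q) *
          (ε ^ (-(q - s / p)) * Gamma (q - s / p))) := by
        rw [setLIntegral_congr_fun measurableSet_Ioi lintegral_K_left,
          lintegral_const_mul_rpow_mul_exp_neg_mul_Ioi (sub_pos.2 hsq) hε (by positivity)]
    _ = _ := by
        rw [neg_sub]
        ring_nf

theorem integral_rpow_mul_add_rpow_rpow_neg_Ioi (hp : 0 < p) (hs : 0 < s) (hsq : s / p < q)
    (hε : 0 < ε) :
    ∫ t in Ioi (0 : ℝ), t ^ (s - 1) * (ε + t ^ p) ^ (-q) =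
      ε ^ (s / p - q) * (Gamma (s / p) * Gamma (q - s / p) / (p * Gamma q)) := by
  have hq : 0 < q := (div_pos hs hp).trans hsq
  have : 0 < q - s / p := sub_pos.2 hsq
  have nonneg : ∀ᵐ t ∂volume.restrict (Ioi (0 : ℝ)), 0 ≤ t ^ (s - 1) * (ε + t ^ p) ^ (-q) := by
    filter_upwards [ae_restrict_mem measurableSet_Ioi] with t (ht : 0 < t)
    positivity
  rw [integral_eq_lintegral_of_nonneg_ae nonneg (by fun_prop),
    lintegral_rpow_mul_add_rpow_rpow_neg_Ioi hp hs hsq hε, ENNReal.toReal_ofReal (by positivity)]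

end Radial

section Norm

open Module Metric

theorem volumeReal_ball_fin_two (x : EuclideanSpace ℝ (Fin 2)) {r : ℝ} (hr : 0 ≤ r) :
    volume.real (ball x r) = π * r ^ 2 := by
  rw [measureReal_def, EuclideanSpace.volume_ball_fin_two, ENNReal.toReal_mul, ENNReal.toReal_pow,
    ENNReal.toReal_ofReal hr, ENNReal.toReal_ofReal pi_nonneg, mul_comm]

variable {E : Type*} [NormedAddCommGroup E] [NormedSpace ℝ E] [FiniteDimensional ℝ E]
  [Nontrivial E] [MeasurableSpace E] [BorelSpace E] (μ : Measure E) [μ.IsAddHaarMeasure]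
  {ε α : ℝ}

theorem integral_add_norm_rpow_rpow_neg {q : ℝ} (hε : 0 < ε) (hα : 0 < α)
    (hq : finrank ℝ E / α < q) :
    ∫ x, (ε + ‖x‖ ^ α) ^ (-q) ∂μ = finrank ℝ E * μ.real (ball 0 1) * (ε ^ (finrank ℝ E / α - q) *
      (Gamma (finrank ℝ E / α) * Gamma (q - finrank ℝ E / α) / (α * Gamma q))) := by
  have hd : 0 < finrank ℝ E := finrank_pos
  have natCast_pred : ((finrank ℝ E - 1 : ℕ) : ℝ) = finrank ℝ E - 1 := Nat.cast_pred hd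
  rw [integral_fun_norm_addHaar μ fun r ↦ (ε + r ^ α) ^ (-q)]
  simp only [nsmul_eq_mul, smul_eq_mul, ← rpow_natCast, natCast_pred]
  rw [integral_rpow_mul_add_rpow_rpow_neg_Ioi hα (Nat.cast_pos.2 hd) hq hε, mul_assoc]

theorem integral_one_div_add_norm_rpow (hε : 0 < ε) (hα : finrank ℝ E < α) :
    ∫ x, 1 / (ε + ‖x‖ ^ α) ∂μ = finrank ℝ E * μ.real (ball 0 1) *
      (π * ε ^ (finrank ℝ E / α - 1) / (α * sin (finrank ℝ E * π / α))) := by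
  have hα₀ : 0 < α := (Nat.cast_nonneg _).trans_lt hα
  have integral_eq := integral_add_norm_rpow_rpow_neg μ hε hα₀ ((div_lt_one hα₀).2 hα)
  simp only [rpow_neg_one, ← one_div] at integral_eq
  rw [integral_eq, Gamma_mul_Gamma_one_sub, Gamma_one, mul_one,
    show π * (finrank ℝ E / α) = finrank ℝ E * π / α by ring]
  ring

theorem pathloss_integral_general (hε : 0 < ε) (hα : finrank ℝ E < α) :
    Integrable (fun x ↦ 1 / (ε + ‖x‖ ^ α)) μ ∧
    ∫ x, 1 / (ε + ‖x‖ ^ α) ∂μ = finrank ℝ E * μ.real (ball 0 1) *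
      (π * ε ^ (finrank ℝ E / α - 1) / (α * sin (finrank ℝ E * π / α))) := by
  refine ⟨.of_integral_ne_zero ?_, integral_one_div_add_norm_rpow μ hε hα⟩
  have hd : (0 : ℝ) < finrank ℝ E := Nat.cast_pos.2 finrank_pos
  have hα₀ : 0 < α := hd.trans hα
  have unitBall_pos : 0 < μ.real (ball 0 1) :=
    ENNReal.toReal_pos (measure_ball_pos μ 0 one_pos).ne' measure_ball_lt_top.ne
  have sin_pos : 0 < sin (finrank ℝ E * π / α) := by
    refine sin_pos_of_pos_of_lt_pi (by positivity) ?_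
    rw [div_lt_iff₀ hα₀, mul_comm]
    gcongr
  rw [integral_one_div_add_norm_rpow μ hε hα]
  positivity

end Norm

/-- For `ε > 0` and `α > 2`, the function `x ↦ 1/(ε+‖x‖^α)` is integrable on `ℝ²` and
`∫_{ℝ²} 1/(ε+‖x‖^α) dx = 2π²·ε^(2/α−1)/(α·sin(2π/α))`. -/
theorem pathloss_integral (ε α : ℝ) (hε : 0 < ε) (hα : 2 < α) :
    Integrable (fun x : EuclideanSpace ℝ (Fin 2) => 1 / (ε + ‖x‖ ^ α)) ∧
    ∫ x : EuclideanSpace ℝ (Fin 2), 1 / (ε + ‖x‖ ^ α) =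
      2 * π ^ 2 * ε ^ (2 / α - 1) / (α * Real.sin (2 * π / α)) := by
  refine (pathloss_integral_general volume hε (by simpa)).imp_right fun h ↦ h.trans ?_
  rw [finrank_euclideanSpace_fin, volumeReal_ball_fin_two 0 zero_le_one, Nat.cast_ofNat]
  ring
end

section
/- Fix α > 2 and u, v ∈ ℝ² with u ≠ v. For ε > 0 let g_ε(x) = 1/(ε+‖x‖^α). Then lim_{ε→0⁺} (∫_{ℝ²} g_ε(x−u)·g_ε(x−v) dx) / (∫_{ℝ²} g_ε(x)² dx) = 0. -/
open Real MeasureTheory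

/-!
The substitution `x = ε^(1/α) • y` turns `g_ε` into `ε⁻¹ g₁`, so up to a factor common to numerator
and denominator, the ratio is the autocorrelation of `g₁` at the shift `ε^(-1/α) • (v - u)`, which
escapes to infinity as `ε → 0⁺`. The autocorrelation of a square-integrable function vanishing at
infinity tends to zero: `|f y * f (y - t)| ≤ m * |f y| + m * |f (y - t)|` with
`m = min |f y| |f (y - t)|`, and after a translation of the second term both have integrals of the
form `∫ min |f y| |f (y - s)| * |f y|` with `s = ± t`, where `f ^ 2` is a dominating function.
-/

open Filter Topology Module

section Autocorrelation

/-- The autocorrelation `t ↦ ∫ f(x) f(x - t) dμ(x)` of a real function `f` on an additive group.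
It takes the junk value `0` at shifts `t` for which the integrand is not integrable. -/
noncomputable def autocorrelation {G : Type*} [Sub G] [MeasurableSpace G] (μ : Measure G)
    (f : G → ℝ) (t : G) : ℝ :=
  ∫ x, f x * f (x - t) ∂μ

theorem autocorrelation_const_mul {G : Type*} [Sub G] [MeasurableSpace G] (μ : Measure G)
    (c : ℝ) (f : G → ℝ) (t : G) :
    autocorrelation μ (fun x ↦ c * f x) t = c ^ 2 * autocorrelation μ f t := by
  simp only [autocorrelation, ← integral_const_mul]
  congr with x
  ring

theorem autocorrelation_zero {G : Type*} [AddGroup G] [MeasurableSpace G] (μ : Measure G)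
    (f : G → ℝ) : autocorrelation μ f 0 = ∫ x, f x ^ 2 ∂μ := by
  simp only [autocorrelation, sub_zero, sq]

theorem integral_comp_sub_mul_comp_sub {G : Type*} [AddGroup G] [MeasurableSpace G]
    [MeasurableAdd G] (μ : Measure G) [μ.IsAddRightInvariant] (f : G → ℝ) (u v : G) :
    ∫ x, f (x - u) * f (x - v) ∂μ = autocorrelation μ f (v - u) := by
  rw [autocorrelation, ← integral_sub_right_eq_self (fun x ↦ f x * f (x - (v - u))) u]
  simp only [sub_sub_sub_cancel_right]

theorem autocorrelation_smul {E : Type*} [NormedAddCommGroup E] [NormedSpace ℝ E]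
    [FiniteDimensional ℝ E] [MeasurableSpace E] [BorelSpace E] (μ : Measure E) [μ.IsAddHaarMeasure]
    (f : E → ℝ) {r : ℝ} (hr : 0 < r) (t : E) :
    autocorrelation μ f (r • t) = r ^ finrank ℝ E * autocorrelation μ (fun y ↦ f (r • y)) t := by
  simp only [autocorrelation, smul_sub]
  rw [Measure.integral_comp_smul_of_nonneg μ (fun x ↦ f x * f (x - r • t)) r (hR := hr.le),
    smul_eq_mul, mul_inv_cancel_left₀ (by positivity)]

theorem min_abs_mul_abs_le_sq (a b : ℝ) : min |a| |b| * |a| ≤ a ^ 2 := by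
  rw [← sq_abs, sq]
  gcongr
  exact min_le_left _ _

theorem integrable_min_abs_mul_abs {X : Type*} [MeasurableSpace X] {μ : Measure X} {f g : X → ℝ}
    (hf : MemLp f 2 μ) (hg : AEStronglyMeasurable g μ) :
    Integrable (fun x ↦ min |f x| |g x| * |f x|) μ := by
  have hf_meas := hf.aestronglyMeasurable
  refine hf.integrable_sq.mono' ((hf_meas.norm.inf hg.norm).mul hf_meas.norm)
    (.of_forall fun x ↦ ?_)
  rw [Real.norm_of_nonneg (by positivity)]
  exact min_abs_mul_abs_le_sq _ _

theorem abs_mul_le_min_abs_mul_add (a b : ℝ) :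
    |a * b| ≤ min |a| |b| * |a| + min |b| |a| * |b| := by
  rw [abs_mul, ← min_mul_max, min_comm |b|, ← mul_add]
  gcongr
  exact max_le_add_of_nonneg (abs_nonneg a) (abs_nonneg b)

variable {G : Type*} [AddGroup G] [MeasurableSpace G] [MeasurableAdd G] {μ : Measure G}
  [μ.IsAddRightInvariant] {f : G → ℝ}

theorem abs_autocorrelation_le (hf : MemLp f 2 μ) (t : G) :
    |autocorrelation μ f t| ≤
      (∫ x, min |f x| |f (x - t)| * |f x| ∂μ) + ∫ x, min |f x| |f (x - -t)| * |f x| ∂μ := by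
  have hft : MemLp (fun x ↦ f (x - t)) 2 μ :=
    hf.comp_measurePreserving (measurePreserving_sub_right μ t)
  have h_left := integrable_min_abs_mul_abs hf hft.aestronglyMeasurable
  have h_right := integrable_min_abs_mul_abs hft hf.aestronglyMeasurable
  have h_translate : ∫ x, min |f (x - t)| |f x| * |f (x - t)| ∂μ =
      ∫ x, min |f x| |f (x - -t)| * |f x| ∂μ := by
    rw [← integral_sub_right_eq_self (fun x ↦ min |f x| |f (x - -t)| * |f x|) t]
    simp only [sub_neg_eq_add, sub_add_cancel]
  rw [← h_translate, ← integral_add h_left h_right]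
  exact norm_integral_le_of_norm_le (f := fun x ↦ f x * f (x - t)) (h_left.add h_right)
    (.of_forall fun x ↦ abs_mul_le_min_abs_mul_add _ _)

variable [TopologicalSpace G] [IsTopologicalAddGroup G]
  {ι : Type*} {l : Filter ι} [l.IsCountablyGenerated] {τ : ι → G}

theorem tendsto_integral_min_abs_comp_sub_mul_abs (hf : MemLp f 2 μ)
    (hf_zero : Tendsto f (cocompact G) (𝓝 0)) (hτ : Tendsto τ l (cocompact G)) :
    Tendsto (fun i ↦ ∫ x, min |f x| |f (x - τ i)| * |f x| ∂μ) l (𝓝 0) := by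
  have hf_shift (i : ι) : AEStronglyMeasurable (fun x ↦ f (x - τ i)) μ :=
    hf.aestronglyMeasurable.comp_measurePreserving (measurePreserving_sub_right μ (τ i))
  have h_lim (x : G) : Tendsto (fun i ↦ min |f x| |f (x - τ i)| * |f x|) l (𝓝 0) := by
    have h_shift : Tendsto (fun i ↦ f (x - τ i)) l (𝓝 0) :=
      hf_zero.comp ((Homeomorph.subLeft x).isClosedEmbedding.tendsto_cocompact.comp hτ)
    simpa using ((tendsto_const_nhds (x := |f x|)).min h_shift.abs).mul_const |f x|
  simpa using tendsto_integral_filter_of_dominated_convergence (fun x ↦ f x ^ 2)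
    (.of_forall fun i ↦ (integrable_min_abs_mul_abs hf (hf_shift i)).aestronglyMeasurable)
    (.of_forall fun i ↦ .of_forall fun x ↦ by
      rw [Real.norm_of_nonneg (by positivity)]
      exact min_abs_mul_abs_le_sq _ _)
    hf.integrable_sq (.of_forall h_lim)

theorem tendsto_autocorrelation_of_tendsto_cocompact (hf : MemLp f 2 μ)
    (hf_zero : Tendsto f (cocompact G) (𝓝 0)) (hτ : Tendsto τ l (cocompact G)) :
    Tendsto (fun i ↦ autocorrelation μ f (τ i)) l (𝓝 0) := by
  have hτ_neg : Tendsto (fun i ↦ -τ i) l (cocompact G) :=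
    (Homeomorph.neg G).isClosedEmbedding.tendsto_cocompact.comp hτ
  refine squeeze_zero_norm (fun i ↦ abs_autocorrelation_le hf (τ i)) ?_
  simpa using (tendsto_integral_min_abs_comp_sub_mul_abs hf hf_zero hτ).add
    (tendsto_integral_min_abs_comp_sub_mul_abs hf hf_zero hτ_neg)

end Autocorrelation

theorem add_rpow_le_two_rpow_mul_add_rpow {a b p : ℝ} (ha : 0 ≤ a) (hb : 0 ≤ b) (hp : 0 ≤ p) :
    (a + b) ^ p ≤ 2 ^ p * (a ^ p + b ^ p) := by
  have h_max : max a b ^ p ≤ a ^ p + b ^ p := by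
    rcases max_choice a b with h | h <;> rw [h]
    · exact le_add_of_nonneg_right (rpow_nonneg hb p)
    · exact le_add_of_nonneg_left (rpow_nonneg ha p)
  calc (a + b) ^ p ≤ (2 * max a b) ^ p := by
        gcongr
        linarith [le_max_left a b, le_max_right a b]
    _ = 2 ^ p * max a b ^ p := mul_rpow zero_le_two (le_max_of_le_left ha)
    _ ≤ 2 ^ p * (a ^ p + b ^ p) := by gcongr

section PathLoss

variable {E : Type*} [NormedAddCommGroup E]

/-- The path-loss function `g_ε(x) = 1 / (ε + ‖x‖ ^ α)` with exponent `α`, whose parameter `ε`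
regularizes the singular path loss `‖x‖ ^ (-α)`. -/
noncomputable def pathLoss (α ε : ℝ) (x : E) : ℝ :=
  1 / (ε + ‖x‖ ^ α)

theorem pathLoss_smul [NormedSpace ℝ E] {α ε : ℝ} (hα : α ≠ 0) (hε : 0 < ε) (y : E) :
    pathLoss α ε (ε ^ α⁻¹ • y) = ε⁻¹ * pathLoss α 1 y := by
  have h_norm : ‖ε ^ α⁻¹ • y‖ ^ α = ε * ‖y‖ ^ α := by
    rw [norm_smul, Real.norm_of_nonneg (by positivity), mul_rpow (by positivity) (by positivity),
      rpow_inv_rpow hε.le hα]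
  rw [pathLoss, pathLoss, h_norm, one_div, one_div, ← mul_inv, mul_one_add]

theorem pathLoss_le {α ε : ℝ} (hα : 0 ≤ α) (hε : 0 < ε) (x : E) :
    pathLoss α ε x ≤ 2 ^ α * max 1 ε⁻¹ * (1 + ‖x‖) ^ (-α) := by
  have h_one : 1 ≤ max 1 ε⁻¹ * ε := by
    calc 1 = ε⁻¹ * ε := (inv_mul_cancel₀ hε.ne').symm
      _ ≤ max 1 ε⁻¹ * ε := by gcongr; exact le_max_right _ _
  have h_norm : ‖x‖ ^ α ≤ max 1 ε⁻¹ * ‖x‖ ^ α :=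
    le_mul_of_one_le_left (by positivity) (le_max_left _ _)
  rw [pathLoss, rpow_neg (by positivity), ← div_eq_mul_inv,
    div_le_div_iff₀ (by positivity) (by positivity), one_mul]
  calc (1 + ‖x‖) ^ α ≤ 2 ^ α * (1 ^ α + ‖x‖ ^ α) :=
        add_rpow_le_two_rpow_mul_add_rpow zero_le_one (norm_nonneg x) hα
    _ ≤ 2 ^ α * (max 1 ε⁻¹ * ε + max 1 ε⁻¹ * ‖x‖ ^ α) := by rw [one_rpow]; gcongr
    _ = 2 ^ α * max 1 ε⁻¹ * (ε + ‖x‖ ^ α) := by ring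

theorem tendsto_pathLoss_cocompact [ProperSpace E] {α : ℝ} (hα : 0 < α) (ε : ℝ) :
    Tendsto (pathLoss α ε : E → ℝ) (cocompact E) (𝓝 0) := by
  unfold pathLoss
  simp only [one_div]
  exact (tendsto_atTop_add_const_left _ ε
    ((tendsto_rpow_atTop hα).comp tendsto_norm_cocompact_atTop)).inv_tendsto_atTop

theorem tendsto_inv_rpow_smul_cocompact [NormedSpace ℝ E] [ProperSpace E] {p : ℝ} (hp : 0 < p)
    {w : E} (hw : w ≠ 0) :
    Tendsto (fun ε : ℝ ↦ (ε ^ p)⁻¹ • w) (𝓝[>] 0) (cocompact E) := by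
  have h_scale : Tendsto (fun ε : ℝ ↦ (ε ^ p)⁻¹) (𝓝[>] 0) atTop :=
    (tendsto_rpow_neg_nhdsGT_zero (neg_lt_zero.mpr hp)).congr' <| by
      filter_upwards [self_mem_nhdsWithin] with ε hε
      exact rpow_neg (le_of_lt hε) p
  rw [← Metric.cobounded_eq_cocompact, ← tendsto_norm_atTop_iff_cobounded]
  simp only [norm_smul]
  exact (tendsto_norm_atTop_atTop.comp h_scale).atTop_mul_const (norm_pos_iff.mpr hw)

variable [NormedSpace ℝ E] [FiniteDimensional ℝ E] [MeasurableSpace E] [BorelSpace E]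
  (μ : Measure E) [μ.IsAddHaarMeasure]

theorem memLp_two_pathLoss {α ε : ℝ} (hα : finrank ℝ E < 2 * α) (hε : 0 < ε) :
    MemLp (pathLoss α ε : E → ℝ) 2 μ := by
  have hα_nonneg : 0 ≤ α := by linarith [(finrank ℝ E).cast_nonneg (α := ℝ)]
  have h_meas : Measurable (pathLoss α ε : E → ℝ) := by unfold pathLoss; fun_prop
  rw [memLp_two_iff_integrable_sq h_meas.aestronglyMeasurable]
  refine ((integrable_one_add_norm hα).const_mul ((2 ^ α * max 1 ε⁻¹) ^ 2)).mono'
    (h_meas.pow_const 2).aestronglyMeasurable (.of_forall fun x ↦ ?_)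
  have h_nonneg : 0 ≤ pathLoss α ε x := by unfold pathLoss; positivity
  calc ‖pathLoss α ε x ^ 2‖ = pathLoss α ε x ^ 2 := Real.norm_of_nonneg (by positivity)
    _ ≤ (2 ^ α * max 1 ε⁻¹ * (1 + ‖x‖) ^ (-α)) ^ 2 := by
        gcongr
        exact pathLoss_le hα_nonneg hε x
    _ = (2 ^ α * max 1 ε⁻¹) ^ 2 * (1 + ‖x‖) ^ (-(2 * α)) := by
        rw [mul_pow, ← rpow_mul_natCast (by positivity), Nat.cast_two, neg_mul, mul_comm α]

theorem autocorrelation_pathLoss {α ε : ℝ} (hα : α ≠ 0) (hε : 0 < ε) (t : E) :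
    autocorrelation μ (pathLoss α ε) t =
      (ε ^ α⁻¹) ^ finrank ℝ E * ε⁻¹ ^ 2 *
        autocorrelation μ (pathLoss α 1) ((ε ^ α⁻¹)⁻¹ • t) := by
  have hr : 0 < ε ^ α⁻¹ := rpow_pos_of_pos hε _
  conv_lhs => rw [← smul_inv_smul₀ hr.ne' t]
  simp only [autocorrelation_smul μ _ hr, pathLoss_smul hα hε, autocorrelation_const_mul, mul_assoc]

theorem spatial_correlation_vanishes_singular_limit_general {α : ℝ} (hα : finrank ℝ E < 2 * α)
    {u v : E} (huv : u ≠ v) :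
    Tendsto
      (fun ε : ℝ ↦
        (∫ x, pathLoss α ε (x - u) * pathLoss α ε (x - v) ∂μ) / ∫ x, pathLoss α ε x ^ 2 ∂μ)
      (𝓝[>] 0) (𝓝 0) := by
  have hα_pos : 0 < α := by linarith [(finrank ℝ E).cast_nonneg (α := ℝ)]
  have : ProperSpace E := FiniteDimensional.proper_real E
  have h_lim : Tendsto (fun ε : ℝ ↦
      autocorrelation μ (pathLoss α 1) ((ε ^ α⁻¹)⁻¹ • (v - u)) /
        autocorrelation μ (pathLoss α 1 : E → ℝ) 0) (𝓝[>] 0) (𝓝 0) := by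
    simpa only [zero_div] using (tendsto_autocorrelation_of_tendsto_cocompact
      (memLp_two_pathLoss μ hα one_pos) (tendsto_pathLoss_cocompact hα_pos 1)
      (tendsto_inv_rpow_smul_cocompact (inv_pos.mpr hα_pos)
        (sub_ne_zero.mpr huv.symm))).div_const _
  refine h_lim.congr' ?_
  filter_upwards [self_mem_nhdsWithin] with ε (hε : 0 < ε)
  rw [integral_comp_sub_mul_comp_sub, ← autocorrelation_zero,
    autocorrelation_pathLoss μ hα_pos.ne' hε, autocorrelation_pathLoss μ hα_pos.ne' hε 0,
    smul_zero, mul_div_mul_left _ _ (by positivity)]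

end PathLoss

/-- Fix `α > 2` and `u ≠ v` in `ℝ²`. For `ε > 0` let `g_ε(x) = 1/(ε+‖x‖^α)`. Then
`lim_{ε→0⁺} (∫ g_ε(x−u)·g_ε(x−v) dx) / (∫ g_ε(x)² dx) = 0`. -/
theorem spatial_correlation_vanishes_singular_limit (α : ℝ) (hα : 2 < α)
    (u v : EuclideanSpace ℝ (Fin 2)) (huv : u ≠ v) :
    Filter.Tendsto
      (fun ε : ℝ =>
        (∫ x : EuclideanSpace ℝ (Fin 2),
            (1 / (ε + ‖x - u‖ ^ α)) * (1 / (ε + ‖x - v‖ ^ α))) /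
        (∫ x : EuclideanSpace ℝ (Fin 2), (1 / (ε + ‖x‖ ^ α)) ^ 2))
      (nhdsWithin 0 (Set.Ioi 0)) (nhds 0) :=
  spatial_correlation_vanishes_singular_limit_general volume
    (by rw [finrank_euclideanSpace_fin]; push_cast; linarith) huv
end

section
/- For every a > 0 and α > 2, the function x ↦ a/(a+‖x‖^α) is integrable on ℝ² and ∫_{ℝ²} a/(a+‖x‖^α) dx = 2·a^{2/α}·π²/(α·sin(2π/α)). -/
open Real MeasureTheory

/-!
In dimension `d`, polar coordinates lead to `∫₀^∞ r ^ (d - 1) * a / (a + r ^ p) dr`. Writing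
`(a + r ^ p) ^ (-ν)` as the Gamma integral `Γ(ν)⁻¹ ∫₀^∞ u ^ (ν - 1) * exp (-(a + r ^ p) u) du`
and exchanging the two integrals leaves two further Gamma integrals, hence a Beta function.
For `ν = 1` Euler's reflection formula turns it into a sine.
-/

open Set Module ProbabilityTheory

section BetaKernel

/-- The integrand in `(r, u)` of the double integral over the positive quadrant that links the
Gamma and Beta functions: integrating out `u` gives a multiple of
`r ^ (s - 1) * (a + r ^ p) ^ (-ν)`, and integrating out `r` gives a Gamma integrand in `u`. -/
noncomputable def betaKernel (a p s ν r u : ℝ) : ℝ :=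
  r ^ (s - 1) * u ^ (ν - 1) * exp (-((a + r ^ p) * u))

variable {a p s ν r u : ℝ}

lemma betaKernel_nonneg (hr : 0 ≤ r) (hu : 0 ≤ u) : 0 ≤ betaKernel a p s ν r u := by
  unfold betaKernel
  positivity

lemma betaKernel_eq_mul :
    betaKernel a p s ν r u =
      u ^ (ν - 1) * exp (-(a * u)) * (r ^ (s - 1) * exp (-u * r ^ p)) := by
  have exp_split : exp (-((a + r ^ p) * u)) = exp (-(a * u)) * exp (-u * r ^ p) := by
    rw [← exp_add]
    ring_nf
  rw [betaKernel, exp_split]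
  ring

lemma measurable_uncurry_betaKernel :
    Measurable (Function.uncurry (betaKernel a p s ν)) := by
  unfold betaKernel Function.uncurry
  fun_prop

lemma integral_betaKernel_right (hν : 0 < ν) (hr : 0 < a + r ^ p) :
    ∫ u in Ioi 0, betaKernel a p s ν r u = Gamma ν * (r ^ (s - 1) * (a + r ^ p) ^ (-ν)) := by
  simp only [betaKernel, mul_assoc]
  rw [integral_const_mul, integral_rpow_mul_exp_neg_mul_Ioi hν hr, one_div, inv_rpow hr.le,
    ← rpow_neg hr.le]
  ring

lemma integrableOn_betaKernel_left (hp : 0 < p) (hs : 0 < s) (hu : 0 < u) :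
    IntegrableOn (fun r ↦ betaKernel a p s ν r u) (Ioi 0) := by
  simp only [betaKernel_eq_mul]
  exact (integrableOn_rpow_mul_exp_neg_mul_rpow (by linarith) hp hu).const_mul _

lemma integral_betaKernel_left (hp : 0 < p) (hs : 0 < s) (hu : 0 < u) :
    ∫ r in Ioi 0, betaKernel a p s ν r u =
      Gamma (s / p) / p * (u ^ (ν - s / p - 1) * exp (-(a * u))) := by
  have rpow_combine : u ^ (ν - s / p - 1) = u ^ (ν - 1) * u ^ (-s / p) := by
    rw [← rpow_add hu]
    ring_nf
  simp only [betaKernel_eq_mul]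
  rw [integral_const_mul, integral_rpow_mul_exp_neg_mul_rpow hp (by linarith) hu, rpow_combine,
    sub_add_cancel]
  ring

lemma integrable_uncurry_betaKernel (ha : 0 < a) (hp : 0 < p) (hs : 0 < s) (hν : s / p < ν) :
    Integrable (Function.uncurry (betaKernel a p s ν))
      ((volume.restrict (Ioi 0)).prod (volume.restrict (Ioi 0))) := by
  refine (integrable_prod_iff' measurable_uncurry_betaKernel.aestronglyMeasurable).2 ⟨?_, ?_⟩
  · filter_upwards [ae_restrict_mem measurableSet_Ioi] with u hu
    exact integrableOn_betaKernel_left hp hs hu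
  · have gamma_integrable :
        IntegrableOn (fun u : ℝ ↦ u ^ (ν - s / p - 1) * exp (-(a * u))) (Ioi 0) := by
      simpa using integrableOn_rpow_mul_exp_neg_mul_rpow
        (show -1 < ν - s / p - 1 by linarith) one_pos ha
    refine IntegrableOn.congr_fun (gamma_integrable.const_mul (Gamma (s / p) / p)) (fun u hu ↦ ?_)
      measurableSet_Ioi
    rw [← integral_betaKernel_left hp hs hu]
    exact setIntegral_congr_fun measurableSet_Ioi fun r hr ↦
      (norm_of_nonneg (betaKernel_nonneg (le_of_lt hr) (le_of_lt hu))).symm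

end BetaKernel

section BetaIntegral

variable {a p s ν : ℝ}

lemma integrableOn_rpow_mul_add_rpow_rpow_neg
    (ha : 0 < a) (hp : 0 < p) (hs : 0 < s) (hν : s / p < ν) :
    IntegrableOn (fun r : ℝ ↦ r ^ (s - 1) * (a + r ^ p) ^ (-ν)) (Ioi 0) := by
  have hν₀ : 0 < ν := (div_pos hs hp).trans hν
  refine IntegrableOn.congr_fun
    ((integrable_uncurry_betaKernel ha hp hs hν).integral_prod_left.const_mul (Gamma ν)⁻¹)
    (fun r hr ↦ ?_) measurableSet_Ioi
  have hbase : 0 < a + r ^ p := add_pos ha (rpow_pos_of_pos hr p)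
  simp only [Function.uncurry_apply_pair]
  rw [integral_betaKernel_right hν₀ hbase, inv_mul_cancel_left₀ (Gamma_pos_of_pos hν₀).ne']

lemma integral_rpow_mul_add_rpow_rpow_neg
    (ha : 0 < a) (hp : 0 < p) (hs : 0 < s) (hν : s / p < ν) :
    ∫ r in Ioi (0 : ℝ), r ^ (s - 1) * (a + r ^ p) ^ (-ν) =
      a ^ (s / p - ν) / p * beta (s / p) (ν - s / p) := by
  have hν₀ : 0 < ν := (div_pos hs hp).trans hν
  have gamma_mul_integral :=
    calc Gamma ν * ∫ r in Ioi (0 : ℝ), r ^ (s - 1) * (a + r ^ p) ^ (-ν)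
      _ = ∫ r in Ioi 0, ∫ u in Ioi 0, betaKernel a p s ν r u := by
        rw [← integral_const_mul]
        exact setIntegral_congr_fun measurableSet_Ioi fun r hr ↦
          (integral_betaKernel_right hν₀ (add_pos ha (rpow_pos_of_pos hr p))).symm
      _ = ∫ u in Ioi 0, ∫ r in Ioi 0, betaKernel a p s ν r u :=
        integral_integral_swap (integrable_uncurry_betaKernel ha hp hs hν)
      _ = ∫ u in Ioi 0, Gamma (s / p) / p * (u ^ (ν - s / p - 1) * exp (-(a * u))) :=
        setIntegral_congr_fun measurableSet_Ioi fun u hu ↦ integral_betaKernel_left hp hs hu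
      _ = Gamma (s / p) / p * (a ^ (s / p - ν) * Gamma (ν - s / p)) := by
        rw [integral_const_mul, integral_rpow_mul_exp_neg_mul_Ioi (sub_pos.2 hν) ha, one_div,
          inv_rpow ha.le, ← rpow_neg ha.le, neg_sub]
  rw [beta, add_sub_cancel, ← mul_right_inj' (Gamma_pos_of_pos hν₀).ne', gamma_mul_integral]
  field_simp [(Gamma_pos_of_pos hν₀).ne']

lemma beta_one_sub (x : ℝ) : beta x (1 - x) = π / sin (π * x) := by
  rw [beta, add_sub_cancel, Gamma_one, div_one, Gamma_mul_Gamma_one_sub]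

lemma integrableOn_rpow_mul_div_add_rpow (ha : 0 < a) (hs : 0 < s) (hsp : s < p) :
    IntegrableOn (fun r : ℝ ↦ r ^ (s - 1) * (a / (a + r ^ p))) (Ioi 0) := by
  have hp : 0 < p := hs.trans hsp
  refine IntegrableOn.congr_fun
    ((integrableOn_rpow_mul_add_rpow_rpow_neg ha hp hs ((div_lt_one hp).2 hsp)).const_mul a)
    (fun r _ ↦ ?_) measurableSet_Ioi
  simp only [rpow_neg_one]
  ring

lemma integral_rpow_mul_div_add_rpow (ha : 0 < a) (hs : 0 < s) (hsp : s < p) :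
    ∫ r in Ioi (0 : ℝ), r ^ (s - 1) * (a / (a + r ^ p)) =
      a ^ (s / p) * π / (p * sin (π * (s / p))) := by
  have hp : 0 < p := hs.trans hsp
  calc ∫ r in Ioi (0 : ℝ), r ^ (s - 1) * (a / (a + r ^ p))
    _ = a * ∫ r in Ioi (0 : ℝ), r ^ (s - 1) * (a + r ^ p) ^ (-1 : ℝ) := by
      rw [← integral_const_mul]
      congr with r
      rw [rpow_neg_one]
      ring
    _ = a * (a ^ (s / p - 1) / p * (π / sin (π * (s / p)))) := by
      rw [integral_rpow_mul_add_rpow_rpow_neg ha hp hs ((div_lt_one hp).2 hsp), beta_one_sub]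
    _ = a ^ (s / p) * π / (p * sin (π * (s / p))) := by
      rw [rpow_sub_one ha.ne']
      field_simp

end BetaIntegral

theorem success_exponent_integral_general {E : Type*} [NormedAddCommGroup E] [NormedSpace ℝ E]
    [FiniteDimensional ℝ E] [Nontrivial E] [MeasurableSpace E] [BorelSpace E]
    (μ : Measure E) [μ.IsAddHaarMeasure] {a α : ℝ} (ha : 0 < a) (hα : finrank ℝ E < α) :
    Integrable (fun x : E ↦ a / (a + ‖x‖ ^ α)) μ ∧
    ∫ x, a / (a + ‖x‖ ^ α) ∂μ =
      finrank ℝ E * μ.real (Metric.ball 0 1) *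
        (a ^ (finrank ℝ E / α) * π / (α * sin (π * (finrank ℝ E / α)))) := by
  have dim_pos : 0 < finrank ℝ E := finrank_pos
  have dim_pos_real : (0 : ℝ) < finrank ℝ E := Nat.cast_pos.2 dim_pos
  have jacobian_eq (r : ℝ) : r ^ (finrank ℝ E - 1) = r ^ ((finrank ℝ E : ℝ) - 1) := by
    rw [← rpow_natCast, Nat.cast_pred dim_pos]
  constructor
  · rw [integrable_fun_norm_addHaar μ (f := fun r ↦ a / (a + r ^ α))]
    simpa only [jacobian_eq, smul_eq_mul] using
      integrableOn_rpow_mul_div_add_rpow ha dim_pos_real hα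
  · rw [integral_fun_norm_addHaar μ (fun r ↦ a / (a + r ^ α))]
    simp only [jacobian_eq, smul_eq_mul, nsmul_eq_mul, mul_assoc,
      integral_rpow_mul_div_add_rpow ha dim_pos_real hα]

lemma volume_real_ball_zero_one_fin_two :
    volume.real (Metric.ball (0 : EuclideanSpace ℝ (Fin 2)) 1) = π := by
  simp [Measure.real, pi_pos.le]

/-- For every `a > 0` and `α > 2`, the function `x ↦ a/(a+‖x‖^α)` is integrable on `ℝ²`
and `∫_{ℝ²} a/(a+‖x‖^α) dx = 2·a^(2/α)·π²/(α·sin(2π/α))`. -/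
theorem success_exponent_integral (a α : ℝ) (ha : 0 < a) (hα : 2 < α) :
    Integrable (fun x : EuclideanSpace ℝ (Fin 2) => a / (a + ‖x‖ ^ α)) ∧
    ∫ x : EuclideanSpace ℝ (Fin 2), a / (a + ‖x‖ ^ α) =
      2 * a ^ (2 / α) * π ^ 2 / (α * Real.sin (2 * π / α)) := by
  convert success_exponent_integral_general (volume : Measure (EuclideanSpace ℝ (Fin 2))) ha
    (by simpa using hα) using 2
  rw [volume_real_ball_zero_one_fin_two, finrank_euclideanSpace_fin, Nat.cast_ofNat]
  ring_nf
end

section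
/- For every λ > 0, p ∈ (0,1], a > 0, and α > 2, exp(λ·p²·∫_{ℝ²} (a/(a+‖x‖^α))² dx) > 1, and this quantity equals exp(2·λ·a^{2/α}·p²·π²·(α−2)·csc(2π/α)/α²), which is strictly increasing in each of λ, p, and a. -/
open Real MeasureTheory

/-!
In polar coordinates, the substitutions `t = r ^ α` and `x = t / (a + t)` turn the integral of
`(a / (a + ‖x‖ ^ α)) ^ s` over a `d`-dimensional space into the Beta integral
`B(d / α, s - d / α)`, up to the factor `d / α · vol(ball) · a ^ (d / α)`. For `s = 2`, Euler's
reflection formula evaluates it as `B(δ, 2 - δ) = (1 - δ) π / sin (π δ)`. Positivity of the Beta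
function then gives the sign of `(α - d) / sin (d π / α)`, hence both the bound by `1` and the
monotonicity.
-/

open Module Set
open ProbabilityTheory (beta beta_pos lintegral_betaPDF lintegral_betaPDF_eq_one)

section BetaIntegrals

theorem integral_Ioo_rpow_mul_one_sub_rpow {u v : ℝ} (hu : 0 < u) (hv : 0 < v) :
    ∫ x in Ioo (0 : ℝ) 1, x ^ (u - 1) * (1 - x) ^ (v - 1) = beta u v := by
  have hbeta : 0 < beta u v := beta_pos hu hv
  have normalized :
      ∫ x in Ioo (0 : ℝ) 1, 1 / beta u v * x ^ (u - 1) * (1 - x) ^ (v - 1) = 1 := by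
    rw [integral_eq_lintegral_of_nonneg_ae, ← lintegral_betaPDF, lintegral_betaPDF_eq_one hu hv,
      ENNReal.toReal_one]
    · filter_upwards [ae_restrict_mem measurableSet_Ioo] with x hx
      have : 0 < x := hx.1
      have : 0 < 1 - x := sub_pos.2 hx.2
      simp only [Pi.zero_apply]
      positivity
    · exact Measurable.aestronglyMeasurable (by fun_prop)
  simp only [mul_assoc, integral_const_mul] at normalized
  field_simp at normalized
  exact normalized

theorem bijOn_div_add_Ioi_Ioo {a : ℝ} (ha : 0 < a) :
    BijOn (fun t : ℝ ↦ t / (a + t)) (Ioi 0) (Ioo 0 1) := by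
  refine InvOn.bijOn (f' := fun x ↦ a * x / (1 - x)) ⟨?_, ?_⟩ ?_ ?_
  · intro t (ht : 0 < t)
    have : 1 - t / (a + t) = a / (a + t) := by field_simp; ring
    simp only [this]
    field_simp
  · intro x hx
    have : 1 - x ≠ 0 := (sub_pos.2 hx.2).ne'
    have : a + a * x / (1 - x) = a / (1 - x) := by field_simp; ring
    simp only [this]
    field_simp
  · intro t (ht : 0 < t)
    exact ⟨by positivity, (div_lt_one (by positivity)).2 (by linarith)⟩
  · intro x hx
    exact div_pos (mul_pos ha hx.1) (sub_pos.2 hx.2)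

theorem integral_Ioi_comp_div_add {F : Type*} [NormedAddCommGroup F] [NormedSpace ℝ F]
    (f : ℝ → F) {a : ℝ} (ha : 0 < a) :
    ∫ t in Ioi (0 : ℝ), (a / (a + t) ^ 2) • f (t / (a + t)) = ∫ x in Ioo (0 : ℝ) 1, f x := by
  have hderiv : ∀ t ∈ Ioi (0 : ℝ),
      HasDerivWithinAt (fun t ↦ t / (a + t)) (a / (a + t) ^ 2) (Ioi 0) t := by
    intro t (ht : 0 < t)
    have hquot := (hasDerivAt_id t).div ((hasDerivAt_id t).const_add a) (add_pos ha ht).ne'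
    exact (hquot.congr_deriv (by simp)).hasDerivWithinAt
  rw [← (bijOn_div_add_Ioi_Ioo ha).image_eq, integral_image_eq_integral_abs_deriv_smul
    measurableSet_Ioi hderiv (bijOn_div_add_Ioi_Ioo ha).injOn]
  refine setIntegral_congr_fun measurableSet_Ioi fun t (ht : 0 < t) ↦ ?_
  simp only [abs_of_pos (show 0 < a / (a + t) ^ 2 by positivity)]

theorem integral_Ioi_rpow_mul_div_add_rpow {a u v : ℝ} (ha : 0 < a) (hu : 0 < u) (hv : 0 < v) :
    ∫ t in Ioi (0 : ℝ), t ^ (u - 1) * (a / (a + t)) ^ (u + v) = a ^ u * beta u v := by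
  rw [← integral_Ioo_rpow_mul_one_sub_rpow hu hv, ← integral_Ioi_comp_div_add _ ha,
    ← integral_const_mul]
  refine setIntegral_congr_fun measurableSet_Ioi fun t (ht : 0 < t) ↦ ?_
  have hat : 0 < a + t := add_pos ha ht
  have hone_sub : 1 - t / (a + t) = a / (a + t) := by field_simp; ring
  simp only [hone_sub, smul_eq_mul, div_rpow ht.le hat.le, div_rpow ha.le hat.le,
    rpow_sub_one ha.ne', rpow_sub_one hat.ne', rpow_add ha, rpow_add hat]
  field_simp

theorem integral_Ioi_rpow_mul_div_add_rpow_rpow {a α d s : ℝ} (ha : 0 < a) (hα : 0 < α)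
    (hd : 0 < d) (hs : d / α < s) :
    ∫ r in Ioi (0 : ℝ), r ^ (d - 1) * (a / (a + r ^ α)) ^ s =
      a ^ (d / α) * beta (d / α) (s - d / α) / α := by
  have hbeta := integral_Ioi_rpow_mul_div_add_rpow ha (div_pos hd hα) (sub_pos.2 hs)
  rw [add_sub_cancel, ← integral_comp_rpow_Ioi_of_pos hα] at hbeta
  rw [eq_div_iff hα.ne', mul_comm, ← hbeta, ← integral_const_mul]
  refine setIntegral_congr_fun measurableSet_Ioi fun r (hr : 0 < r) ↦ ?_
  have hjacobian : r ^ (α - 1) * (r ^ α) ^ (d / α - 1) = r ^ (d - 1) := by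
    rw [← rpow_mul hr.le, ← rpow_add hr]
    congr 1
    field_simp
    ring
  simp only [smul_eq_mul, ← hjacobian]
  ring

theorem beta_two_sub_eq_pi_div_sin {δ : ℝ} (hδ : δ ≠ 1) :
    beta δ (2 - δ) = (1 - δ) * π / sin (π * δ) := by
  have hGamma : Gamma (2 - δ) = (1 - δ) * Gamma (1 - δ) := by
    rw [← Gamma_add_one (sub_ne_zero.2 hδ.symm)]
    ring_nf
  rw [beta, add_sub_cancel, Gamma_two, hGamma, mul_div_assoc (1 - δ), ← Gamma_mul_Gamma_one_sub]
  ring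

end BetaIntegrals

section Haar

variable {E : Type*} [NormedAddCommGroup E] [NormedSpace ℝ E] [MeasurableSpace E]

/-- The value `d · vol(ball) · π · (α - d) · csc (d π / α) / α²` of `∫ (1 / (1 + ‖x‖ ^ α)) ^ 2 ∂μ`
on a space of dimension `d`, for `d / 2 < α` and `α ≠ d`. It carries the whole dependence of the
outage correlation on the path-loss exponent apart from the scaling `a ^ (d / α)`. At `α = d` the
convention `0⁻¹ = 0` makes it `0`, which is not the value of the integral. -/
noncomputable def pathLossConstant (μ : Measure E) (α : ℝ) : ℝ :=
  finrank ℝ E * μ.real (Metric.ball 0 1) * π * (α - finrank ℝ E) *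
    (sin (finrank ℝ E * π / α))⁻¹ / α ^ 2

theorem pathLossConstant_eq_beta (μ : Measure E) {α : ℝ} (hα : α ≠ 0) (hne : α ≠ finrank ℝ E) :
    pathLossConstant μ α = finrank ℝ E / α * μ.real (Metric.ball 0 1) *
      beta (finrank ℝ E / α) (2 - finrank ℝ E / α) := by
  have hδ : (finrank ℝ E : ℝ) / α ≠ 1 := fun h ↦ hne ((div_eq_one_iff_eq hα).1 h).symm
  rw [pathLossConstant, beta_two_sub_eq_pi_div_sin hδ, ← mul_div_assoc, mul_comm π]
  field_simp

variable [FiniteDimensional ℝ E] [Nontrivial E] (μ : Measure E) [μ.IsAddHaarMeasure]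

theorem pathLossConstant_pos {α : ℝ} (hdim : finrank ℝ E < 2 * α) (hne : α ≠ finrank ℝ E) :
    0 < pathLossConstant μ α := by
  have hα : 0 < α := by linarith [(finrank ℝ E).cast_nonneg (α := ℝ)]
  have hδ : 0 < (finrank ℝ E : ℝ) / α := div_pos (Nat.cast_pos.2 finrank_pos) hα
  have hball : 0 < μ.real (Metric.ball 0 1) :=
    ENNReal.toReal_pos (Metric.measure_ball_pos μ 0 one_pos).ne' measure_ball_lt_top.ne
  rw [pathLossConstant_eq_beta μ hα.ne' hne]
  exact mul_pos (mul_pos hδ hball) (beta_pos hδ (sub_pos.2 ((div_lt_iff₀ hα).2 hdim)))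

variable [BorelSpace E]

theorem integral_div_add_norm_rpow_rpow {a α s : ℝ} (ha : 0 < a) (hα : 0 < α)
    (hs : finrank ℝ E / α < s) :
    ∫ x, (a / (a + ‖x‖ ^ α)) ^ s ∂μ = a ^ (finrank ℝ E / α) *
      (finrank ℝ E / α * μ.real (Metric.ball 0 1) *
        beta (finrank ℝ E / α) (s - finrank ℝ E / α)) := by
  have hdim : 0 < finrank ℝ E := finrank_pos
  have hradial := integral_Ioi_rpow_mul_div_add_rpow_rpow ha hα (Nat.cast_pos.2 hdim) hs
  simp only [← Nat.cast_pred hdim, rpow_natCast] at hradial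
  rw [integral_fun_norm_addHaar μ (fun r ↦ (a / (a + r ^ α)) ^ s)]
  simp only [smul_eq_mul, nsmul_eq_mul, hradial]
  ring

theorem integral_div_add_norm_rpow_sq {a α : ℝ} (ha : 0 < a) (hdim : finrank ℝ E < 2 * α)
    (hne : α ≠ finrank ℝ E) :
    ∫ x, (a / (a + ‖x‖ ^ α)) ^ 2 ∂μ = a ^ (finrank ℝ E / α) * pathLossConstant μ α := by
  have hα : 0 < α := by linarith [(finrank ℝ E).cast_nonneg (α := ℝ)]
  have hbeta := integral_div_add_norm_rpow_rpow μ ha hα ((div_lt_iff₀ hα).2 hdim)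
  simpa only [rpow_two, ← pathLossConstant_eq_beta μ hα.ne' hne] using hbeta

theorem outage_correlation_ratio_general {α lam p a : ℝ} (hdim : finrank ℝ E < 2 * α)
    (hne : α ≠ finrank ℝ E) (hlam : 0 < lam) (hp : 0 < p) (ha : 0 < a) :
    1 < exp (lam * p ^ 2 * ∫ x, (a / (a + ‖x‖ ^ α)) ^ 2 ∂μ) ∧
    exp (lam * p ^ 2 * ∫ x, (a / (a + ‖x‖ ^ α)) ^ 2 ∂μ) =
      exp (lam * p ^ 2 * (a ^ (finrank ℝ E / α) * pathLossConstant μ α)) ∧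
    StrictMono (fun l ↦ exp (l * p ^ 2 * (a ^ (finrank ℝ E / α) * pathLossConstant μ α))) ∧
    StrictMonoOn (fun q ↦ exp (lam * q ^ 2 * (a ^ (finrank ℝ E / α) * pathLossConstant μ α)))
      (Ici 0) ∧
    StrictMonoOn (fun b ↦ exp (lam * p ^ 2 * (b ^ (finrank ℝ E / α) * pathLossConstant μ α)))
      (Ici 0) := by
  have hconst : 0 < pathLossConstant μ α := pathLossConstant_pos μ hdim hne
  have hδ : 0 < (finrank ℝ E : ℝ) / α :=
    have hd : 0 < (finrank ℝ E : ℝ) := Nat.cast_pos.2 finrank_pos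
    div_pos hd (by linarith)
  rw [integral_div_add_norm_rpow_sq μ ha hdim hne]
  refine ⟨one_lt_exp_iff.2 (by positivity), rfl, fun l l' hl ↦ ?_, fun q hq q' _ hqq' ↦ ?_,
    fun b hb b' _ hbb' ↦ ?_⟩
  · beta_reduce; gcongr
  · rw [mem_Ici] at hq
    beta_reduce; gcongr
  · rw [mem_Ici] at hb
    beta_reduce; gcongr

end Haar

theorem volume_real_ball_fin_two (x : EuclideanSpace ℝ (Fin 2)) {r : ℝ} (hr : 0 ≤ r) :
    volume.real (Metric.ball x r) = r ^ 2 * π := by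
  simp [Measure.real, EuclideanSpace.volume_ball_fin_two, pi_pos.le, hr]

theorem closed_form_exponent_eq_pathLossConstant (α lam p a : ℝ) :
    2 * lam * a ^ (2 / α) * p ^ 2 * π ^ 2 * (α - 2) * (sin (2 * π / α))⁻¹ / α ^ 2 =
      lam * p ^ 2 * (a ^ (finrank ℝ (EuclideanSpace ℝ (Fin 2)) / α) *
        pathLossConstant (volume : Measure (EuclideanSpace ℝ (Fin 2))) α) := by
  rw [pathLossConstant, volume_real_ball_fin_two 0 zero_le_one, finrank_euclideanSpace_fin,
    Nat.cast_ofNat]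
  ring

/-- For every `λ > 0`, `p ∈ (0,1]`, `a > 0`, and `α > 2`,
`exp(λ·p²·∫_{ℝ²} (a/(a+‖x‖^α))² dx) > 1`, and this quantity equals
`exp(2·λ·a^(2/α)·p²·π²·(α−2)·csc(2π/α)/α²)`, which is strictly increasing in each of
`λ`, `p`, and `a`. -/
theorem outage_correlation_ratio (α : ℝ) (hα : 2 < α)
    (lam p a : ℝ) (hlam : 0 < lam) (hp : p ∈ Set.Ioc (0 : ℝ) 1) (ha : 0 < a) :
    (1 < Real.exp (lam * p ^ 2 *
        ∫ x : EuclideanSpace ℝ (Fin 2), (a / (a + ‖x‖ ^ α)) ^ 2)) ∧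
    (Real.exp (lam * p ^ 2 *
        ∫ x : EuclideanSpace ℝ (Fin 2), (a / (a + ‖x‖ ^ α)) ^ 2) =
      Real.exp (2 * lam * a ^ (2 / α) * p ^ 2 * π ^ 2 * (α - 2) *
        (Real.sin (2 * π / α))⁻¹ / α ^ 2)) ∧
    (∀ lam' : ℝ, lam < lam' →
      Real.exp (2 * lam * a ^ (2 / α) * p ^ 2 * π ^ 2 * (α - 2) *
          (Real.sin (2 * π / α))⁻¹ / α ^ 2) <
        Real.exp (2 * lam' * a ^ (2 / α) * p ^ 2 * π ^ 2 * (α - 2) *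
          (Real.sin (2 * π / α))⁻¹ / α ^ 2)) ∧
    (∀ p' : ℝ, p' ∈ Set.Ioc (0 : ℝ) 1 → p < p' →
      Real.exp (2 * lam * a ^ (2 / α) * p ^ 2 * π ^ 2 * (α - 2) *
          (Real.sin (2 * π / α))⁻¹ / α ^ 2) <
        Real.exp (2 * lam * a ^ (2 / α) * p' ^ 2 * π ^ 2 * (α - 2) *
          (Real.sin (2 * π / α))⁻¹ / α ^ 2)) ∧
    (∀ a' : ℝ, a < a' →
      Real.exp (2 * lam * a ^ (2 / α) * p ^ 2 * π ^ 2 * (α - 2) *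
          (Real.sin (2 * π / α))⁻¹ / α ^ 2) <
        Real.exp (2 * lam * a' ^ (2 / α) * p ^ 2 * π ^ 2 * (α - 2) *
          (Real.sin (2 * π / α))⁻¹ / α ^ 2)) := by
  have hdim : (finrank ℝ (EuclideanSpace ℝ (Fin 2)) : ℝ) = 2 := by simp
  obtain ⟨one_lt, eq, mono_lam, mono_p, mono_a⟩ := outage_correlation_ratio_general (α := α)
    (volume : Measure (EuclideanSpace ℝ (Fin 2))) (by linarith) (hdim ▸ hα.ne') hlam hp.1 ha
  simp only [closed_form_exponent_eq_pathLossConstant]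
  exact ⟨one_lt, eq, fun _ hlt ↦ mono_lam hlt, fun _ hp' hlt ↦ mono_p hp.1.le hp'.1.le hlt,
    fun _ hlt ↦ mono_a ha.le (ha.trans hlt).le hlt⟩
end
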